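/- Assume ∇²Θ(p) is invertible at a point p = (μ, c, λ) ∈ Ω. Then there is an open neighborhood of p on which Φ is a diffeomorphism onto its image, and the function h := H ∘ Φ⁻¹ of the variables (k, α, M) satisfies, at the point Φ(p): ∂_k h = Θ(p) − α(p) c, ∂_α h = −k(p) c, and ∇_M h = −c B⁻¹ M(p) − λ. -/

import Mathlib

open Matrix

noncomputable section

/-- The state space `ℝ × ℝ × ℝ^N` with coordinates `(μ, c, λ)`
(respectively `(k, α, M)`). -/
abbrev E (N : ℕ) : Type := ℝ × ℝ × (Fin N → ℝ)

/-- Index type for `(N+2) × (N+2)` matrices in `1 + 1 + N` block form. -/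
abbrev Idx (N : ℕ) : Type := Fin 1 ⊕ Fin 1 ⊕ Fin N

/-- The standard basis of `ℝ × ℝ × ℝ^N`. -/
def basisVec (N : ℕ) : Idx N → E N :=
  Sum.elim (fun _ => (1, 0, 0))
    (Sum.elim (fun _ => (0, 1, 0)) (fun i => (0, 0, Pi.single i 1)))

/-- The impulse `Q(M) = (1/2) M · B⁻¹ M`. -/
def Qimp (N : ℕ) (B : Matrix (Fin N) (Fin N) ℝ) (M : Fin N → ℝ) : ℝ :=
  (1/2) * (M ⬝ᵥ B⁻¹.mulVec M)

/-- Partial derivative `∂_μΘ`. -/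
def dmu (N : ℕ) (Θ : E N → ℝ) (p : E N) : ℝ := fderiv ℝ Θ p (1, 0, 0)

/-- Partial derivative `∂_cΘ`. -/
def dc (N : ℕ) (Θ : E N → ℝ) (p : E N) : ℝ := fderiv ℝ Θ p (0, 1, 0)

/-- Gradient `∇_λΘ` in the `λ` variables. -/
def gradlam (N : ℕ) (Θ : E N → ℝ) (p : E N) : Fin N → ℝ :=
  fun i => fderiv ℝ Θ p (0, 0, Pi.single i 1)

/-- Hessian matrix of a function on `ℝ × ℝ × ℝ^N` in the standard basis. -/
def hessMat (N : ℕ) (Θ : E N → ℝ) (p : E N) : Matrix (Idx N) (Idx N) ℝ :=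
  Matrix.of fun i j =>
    fderiv ℝ (fun q => fderiv ℝ Θ q (basisVec N j)) p (basisVec N i)

/-- The wavenumber `k = 1/∂_μΘ`. -/
def kfun (N : ℕ) (Θ : E N → ℝ) (p : E N) : ℝ := 1 / dmu N Θ p

/-- The mean value `M = ∇_λΘ/∂_μΘ`. -/
def Mfun (N : ℕ) (Θ : E N → ℝ) (p : E N) : Fin N → ℝ :=
  (dmu N Θ p)⁻¹ • gradlam N Θ p

/-- The variable `α = ∂_cΘ − ∂_μΘ · Q(∇_λΘ/∂_μΘ)`. -/
def afun (N : ℕ) (B : Matrix (Fin N) (Fin N) ℝ) (Θ : E N → ℝ) (p : E N) : ℝ :=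
  dc N Θ p - dmu N Θ p * Qimp N B (Mfun N Θ p)

/-- The map `Φ = (k, α, M)`. -/
def Phi (N : ℕ) (B : Matrix (Fin N) (Fin N) ℝ) (Θ : E N → ℝ) (p : E N) : E N :=
  (kfun N Θ p, afun N B Θ p, Mfun N Θ p)

/-- `Φ` is a local diffeomorphism at `p`: it is smooth and injective on an open
neighborhood of `p`, its image is open, and it admits a smooth local inverse. -/
def IsLocalDiffeoAt (N : ℕ) (Φ : E N → E N) (p : E N) : Prop :=
  ∃ s : Set (E N), IsOpen s ∧ p ∈ s ∧ ContDiffOn ℝ (⊤ : ℕ∞) Φ s ∧ Set.InjOn Φ s ∧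
    IsOpen (Φ '' s) ∧ ∃ Ψ : E N → E N, (∀ x ∈ s, Ψ (Φ x) = x) ∧
      ContDiffOn ℝ (⊤ : ℕ∞) Ψ (Φ '' s)

end

open Matrix in
/-- The averaged Hamiltonian `H = k (Θ − μ ∂_μΘ − c ∂_cΘ − λ·∇_λΘ)`. -/
noncomputable def Hav (N : ℕ) (Θ : E N → ℝ) (p : E N) : ℝ :=
  kfun N Θ p * (Θ p - p.1 * dmu N Θ p - p.2.1 * dc N Θ p - p.2.2 ⬝ᵥ gradlam N Θ p)

/-!
Write `y = (k, α, M) = Φ(x)` for `x = (μ, c, λ)`. The definitions of `k`, `α`, `M` say exactly that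
`k dΘ = dμ + (Q(M) + kα) dc + M · dλ`. Both halves of the theorem are read off this identity.

It expresses `dΘ` as a differentiable function of `y`, so by the chain rule every vector in the
kernel of `DΦ` lies in the kernel of `∇²Θ`, and the inverse function theorem applies.

It also says that `x = Φ⁻¹(y)` is a critical point of
`x ↦ kΘ(x) - (μ + (Q(M) + kα) c + M · λ)`, with critical value `h(y)`. Hence `h` has the same first
derivatives in `y` as this explicit expression with `x` held fixed.
-/

open scoped Topology

section Envelope

variable {𝕜 X Y G : Type*} [NontriviallyNormedField 𝕜] [NormedAddCommGroup X] [NormedSpace 𝕜 X]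
  [NormedAddCommGroup Y] [NormedSpace 𝕜 Y] [NormedAddCommGroup G] [NormedSpace 𝕜 G]

theorem fderiv_envelope {F : Y × X → G} {ψ : Y → X} {y : Y}
    (hF : DifferentiableAt 𝕜 F (y, ψ y)) (hψ : DifferentiableAt 𝕜 ψ y)
    (hcrit : fderiv 𝕜 (fun x => F (y, x)) (ψ y) = 0) :
    fderiv 𝕜 (fun z => F (z, ψ z)) y = fderiv 𝕜 (fun z => F (z, ψ y)) y := by
  let F' := fderiv 𝕜 F (y, ψ y)
  have hF' : HasFDerivAt F F' (y, ψ y) := hF.hasFDerivAt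
  have hleft : HasFDerivAt (fun z => F (z, ψ y)) (F' ∘L .inl 𝕜 Y X) y :=
    HasFDerivAt.comp (f := fun z => (z, ψ y)) y hF' (hasFDerivAt_prodMk_left y (ψ y))
  have hright : F' ∘L .inr 𝕜 Y X = 0 :=
    (hF'.comp (ψ y) (hasFDerivAt_prodMk_right y (ψ y))).fderiv.symm.trans hcrit
  have htotal : HasFDerivAt (fun z => F (z, ψ z)) (F' ∘L (.prod (.id 𝕜 Y) (fderiv 𝕜 ψ y))) y :=
    HasFDerivAt.comp (f := fun z => (z, ψ z)) y hF' ((hasFDerivAt_id y).prodMk hψ.hasFDerivAt)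
  rw [htotal.fderiv, hleft.fderiv]
  ext w
  calc F' (w, fderiv 𝕜 ψ y w) = F' (w, 0) + F' (0, fderiv 𝕜 ψ y w) := by simp [← map_add]
    _ = F' (w, 0) := add_eq_left.2 (DFunLike.congr_fun hright (fderiv 𝕜 ψ y w))

end Envelope

section InverseFunction

theorem isInvertible_of_injective {𝕜 X : Type*} [NontriviallyNormedField 𝕜] [CompleteSpace 𝕜]
    [NormedAddCommGroup X] [NormedSpace 𝕜 X] [FiniteDimensional 𝕜 X] {L : X →L[𝕜] X}
    (hL : Function.Injective L) : L.IsInvertible :=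
  ⟨(LinearEquiv.ofInjectiveEndo (L : X →ₗ[𝕜] X) hL).toContinuousLinearEquiv, by ext; rfl⟩

theorem exists_contDiffOn_leftInverse {𝕜 X Y : Type*} [RCLike 𝕜] [NormedAddCommGroup X]
    [NormedSpace 𝕜 X] [CompleteSpace X] [NormedAddCommGroup Y] [NormedSpace 𝕜 Y]
    {n : WithTop ℕ∞} (hn : n ≠ 0) {f : X → Y} {s : Set X} (hs : IsOpen s)
    (hf : ContDiffOn 𝕜 n f s) {a : X} (ha : a ∈ s) (hinv : (fderiv 𝕜 f a).IsInvertible) :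
    ∃ t, IsOpen t ∧ a ∈ t ∧ t ⊆ s ∧ Set.InjOn f t ∧ IsOpen (f '' t) ∧
      ∃ g : Y → X, (∀ x ∈ t, g (f x) = x) ∧ ContDiffOn 𝕜 n g (f '' t) := by
  have hat : ∀ x ∈ s, ContDiffAt 𝕜 n f x := fun x hx => hf.contDiffAt (hs.mem_nhds hx)
  have hderiv : ∀ x ∈ s, HasFDerivAt f (fderiv 𝕜 f x) x := fun x hx =>
    ((hat x hx).differentiableAt hn).hasFDerivAt
  obtain ⟨a', ha'⟩ := hinv
  let e := (hat a ha).toOpenPartialHomeomorph f (ha' ▸ hderiv a ha) hn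
  have hae : a ∈ e.source := (hat a ha).mem_toOpenPartialHomeomorph_source _ hn
  -- Invertibility of the derivative at `a` alone gives smoothness of the inverse only at `f a`.
  let u := s ∩ fderiv 𝕜 f ⁻¹' Set.range ((↑) : (X ≃L[𝕜] Y) → X →L[𝕜] Y)
  have hu : IsOpen u := (hf.continuousOn_fderiv_of_isOpen hs
    (ENat.one_le_iff_ne_zero_withTop.2 hn)).isOpen_inter_preimage hs ContinuousLinearEquiv.isOpen
  have ht : IsOpen (e.source ∩ u) := e.open_source.inter hu
  refine ⟨e.source ∩ u, ht, ⟨hae, ha, a', ha'⟩, fun x hx => hx.2.1,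
    e.injOn.mono Set.inter_subset_left,
    e.isOpen_image_of_subset_source ht Set.inter_subset_left,
    e.symm, fun x hx => e.left_inv hx.1, ?_⟩
  rintro _ ⟨x, ⟨hxe, hxs, x', hx'⟩, rfl⟩
  have hex : e.symm (f x) = x := e.left_inv hxe
  exact (e.contDiffAt_symm (e.map_source hxe) (f₀' := x') (hex.symm ▸ hx' ▸ hderiv x hxs)
    (hex.symm ▸ hat x hxs)).contDiffWithinAt

end InverseFunction

section Coordinates

variable {N : ℕ}

/-- `basisVec N` as a basis of `ℝ × ℝ × ℝ^N`, giving access to linear algebra over bases. -/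
noncomputable def coordBasis (N : ℕ) : Module.Basis (Idx N) ℝ (E N) :=
  (Module.Basis.singleton (Fin 1) ℝ).prod
    ((Module.Basis.singleton (Fin 1) ℝ).prod (Pi.basisFun ℝ (Fin N)))

theorem coe_coordBasis : ⇑(coordBasis N) = basisVec N := by
  ext i : 1
  rcases i with i | i | i <;> simp [coordBasis, basisVec, Prod.zero_eq_mk]

theorem fderiv_apply_eq_partials (Θ : E N → ℝ) (q x : E N) :
    fderiv ℝ Θ q x = x.1 * dmu N Θ q + x.2.1 * dc N Θ q + x.2.2 ⬝ᵥ gradlam N Θ q := by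
  conv_lhs => rw [← (coordBasis N).sum_repr x]
  rw [map_sum]
  simp only [map_smul, coe_coordBasis, smul_eq_mul, Fintype.sum_sum_type]
  simp [coordBasis, basisVec, dmu, dc, gradlam, dotProduct, add_assoc]

theorem eq_zero_of_isUnit_det_hessMat {Θ : E N → ℝ} {p : E N}
    (hΘ : DifferentiableAt ℝ (fderiv ℝ Θ) p) (hdet : IsUnit (hessMat N Θ p).det) {v : E N}
    (hv : fderiv ℝ (fderiv ℝ Θ) p v = 0) : v = 0 := by
  have hmat : LinearMap.toMatrix₂ (coordBasis N) (coordBasis N)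
      (fderiv ℝ (fderiv ℝ Θ) p).toBilinForm = hessMat N Θ p := by
    ext i j
    simp [LinearMap.toMatrix₂_apply, hessMat, coe_coordBasis, fderiv_clm_apply hΘ]
  refine LinearMap.separatingLeft_of_det_ne_zero (coordBasis N)
    (B := (fderiv ℝ (fderiv ℝ Θ) p).toBilinForm) (hmat ▸ hdet.ne_zero) v fun w => ?_
  simp [hv]

end Coordinates

section Impulse

variable {N : ℕ} {B : Matrix (Fin N) (Fin N) ℝ}

theorem contDiff_Qimp {n : WithTop ℕ∞} : ContDiff ℝ n (Qimp N B) := by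
  unfold Qimp dotProduct Matrix.mulVec dotProduct
  fun_prop

theorem fderiv_Qimp (hB : B.IsSymm) (M v : Fin N → ℝ) :
    fderiv ℝ (Qimp N B) M v = v ⬝ᵥ B⁻¹ *ᵥ M := by
  let b := (toBilin' B⁻¹).toContinuousBilinearMap
  have hb (x y : Fin N → ℝ) : b x y = x ⬝ᵥ B⁻¹ *ᵥ y := toBilin'_apply' ..
  have hQ : Qimp N B = fun x => 1 / 2 * b x x := funext fun x => by rw [hb, Qimp]
  have hderiv := (b.hasFDerivAt_of_bilinear (hasFDerivAt_id M) (hasFDerivAt_id M)).const_mul (1 / 2)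
  have hsymm : M ⬝ᵥ B⁻¹ *ᵥ v = v ⬝ᵥ B⁻¹ *ᵥ M := by
    rw [dotProduct_mulVec, ← mulVec_transpose, transpose_nonsing_inv, hB.eq, dotProduct_comm]
  rw [hQ]
  calc fderiv ℝ (fun x => 1 / 2 * b x x) M v = 1 / 2 * (b M v + b v M) :=
        DFunLike.congr_fun hderiv.fderiv v
    _ = v ⬝ᵥ B⁻¹ *ᵥ M := by rw [hb, hb, hsymm]; ring

end Impulse

section LocalInverse

variable {N : ℕ}

/-- The map `Φ = (k, α, M)` with an arbitrary function `Q` of `M` in place of the quadratic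
impulse; `Phi N B` is `PhiWith N (Qimp N B)`. -/
noncomputable def PhiWith (N : ℕ) (Q : (Fin N → ℝ) → ℝ) (Θ : E N → ℝ) (q : E N) : E N :=
  (kfun N Θ q, dc N Θ q - dmu N Θ q * Q (Mfun N Θ q), Mfun N Θ q)

/-- The covector `dμ + (Q(M) + kα) dc + M · dλ` at `y = (k, α, M)`: the differential `k dΘ`
expressed through the values of `Φ`. -/
noncomputable def scaledCovector (N : ℕ) (Q : (Fin N → ℝ) → ℝ) (y : E N) : E N →L[ℝ] ℝ :=
  .fst ℝ ℝ _ + (Q y.2.2 + y.1 * y.2.1) • (.fst ℝ ℝ _ ∘L .snd ℝ ℝ _) +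
    ∑ i, y.2.2 i • (.proj i ∘L .snd ℝ ℝ _ ∘L .snd ℝ ℝ _)

/-- The generating function `k Θ(x) - (μ + (Q(M) + kα) c + M · λ)` of a pair of points
`y = (k, α, M)` and `x = (μ, c, λ)`; the averaged Hamiltonian is its critical value in `x`. -/
noncomputable def generatingFun (N : ℕ) (Q : (Fin N → ℝ) → ℝ) (Θ : E N → ℝ) (z : E N × E N) : ℝ :=
  z.1.1 * Θ z.2 - scaledCovector N Q z.1 z.2

variable {Q : (Fin N → ℝ) → ℝ} {Θ : E N → ℝ}

theorem contDiffOn_PhiWith {m n : WithTop ℕ∞} (hmn : m + 1 ≤ n) {s : Set (E N)} (hs : IsOpen s)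
    (hQ : ContDiff ℝ m Q) (hΘ : ContDiffOn ℝ n Θ s) (hμ : ∀ q ∈ s, dmu N Θ q ≠ 0) :
    ContDiffOn ℝ m (PhiWith N Q Θ) s := by
  have hpartial (w : E N) : ContDiffOn ℝ m (fun q => fderiv ℝ Θ q w) s :=
    (hΘ.fderiv_of_isOpen hs hmn).clm_apply contDiffOn_const
  have hdmu : ContDiffOn ℝ m (dmu N Θ) s := hpartial _
  have hM : ContDiffOn ℝ m (Mfun N Θ) s :=
    (hdmu.inv hμ).smul (contDiffOn_pi.2 fun _ => hpartial _)
  exact (contDiffOn_const.div hdmu hμ).prodMk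
    (((hpartial _).sub (hdmu.mul (hQ.comp_contDiffOn hM))).prodMk hM)

theorem scaledCovector_apply (y x : E N) :
    scaledCovector N Q y x = x.1 + (Q y.2.2 + y.1 * y.2.1) * x.2.1 + x.2.2 ⬝ᵥ y.2.2 := by
  simp [scaledCovector, dotProduct, mul_comm]

theorem differentiableAt_scaledCovector {y : E N} (hQ : DifferentiableAt ℝ Q y.2.2) :
    DifferentiableAt ℝ (scaledCovector N Q) y := by
  unfold scaledCovector
  fun_prop

theorem kfun_smul_fderiv {q : E N} (hμ : dmu N Θ q ≠ 0) :
    kfun N Θ q • fderiv ℝ Θ q = scaledCovector N Q (PhiWith N Q Θ q) := by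
  refine ContinuousLinearMap.ext fun x => ?_
  have hk : kfun N Θ q * dmu N Θ q = 1 := one_div_mul_cancel hμ
  have hM : x.2.2 ⬝ᵥ Mfun N Θ q = kfun N Θ q * (x.2.2 ⬝ᵥ gradlam N Θ q) := by
    rw [Mfun, kfun, one_div, dotProduct_smul, smul_eq_mul]
  simp only [scaledCovector_apply, PhiWith, _root_.smul_apply, smul_eq_mul,
    fderiv_apply_eq_partials, hM]
  linear_combination (x.1 + Q (Mfun N Θ q) * x.2.1) * hk

theorem Hav_eq_generatingFun {q : E N} (hμ : dmu N Θ q ≠ 0) :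
    Hav N Θ q = generatingFun N Q Θ (PhiWith N Q Θ q, q) := by
  rw [generatingFun, ← kfun_smul_fderiv hμ, _root_.smul_apply, fderiv_apply_eq_partials]
  simp only [Hav, PhiWith, smul_eq_mul]
  ring

theorem injective_fderiv_PhiWith {p : E N} (hQ : DifferentiableAt ℝ Q (Mfun N Θ p))
    (hΦ : DifferentiableAt ℝ (PhiWith N Q Θ) p) (hΘ : DifferentiableAt ℝ (fderiv ℝ Θ) p)
    (hμ : ∀ᶠ q in 𝓝 p, dmu N Θ q ≠ 0) (hdet : IsUnit (hessMat N Θ p).det) :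
    Function.Injective (fderiv ℝ (PhiWith N Q Θ) p) := by
  let covector : E N → E N →L[ℝ] ℝ := fun y => y.1⁻¹ • scaledCovector N Q y
  have hk : (PhiWith N Q Θ p).1 ≠ 0 := one_div_ne_zero hμ.self_of_nhds
  have hcov : DifferentiableAt ℝ covector (PhiWith N Q Θ p) :=
    (differentiableAt_fst.inv hk).smul (differentiableAt_scaledCovector hQ)
  have hfactor : fderiv ℝ Θ =ᶠ[𝓝 p] covector ∘ PhiWith N Q Θ := by
    filter_upwards [hμ] with q hq
    exact (eq_inv_smul_iff₀ (one_div_ne_zero hq)).2 (kfun_smul_fderiv hq)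
  have hchain : fderiv ℝ (fderiv ℝ Θ) p =
      fderiv ℝ covector (PhiWith N Q Θ p) ∘L fderiv ℝ (PhiWith N Q Θ) p :=
    hfactor.fderiv_eq.trans (fderiv_comp p hcov hΦ)
  refine (injective_iff_map_eq_zero _).2 fun v hv => eq_zero_of_isUnit_det_hessMat hΘ hdet ?_
  rw [hchain, ContinuousLinearMap.comp_apply, hv, map_zero]

theorem fderiv_generatingFun_right {q : E N} (hμ : dmu N Θ q ≠ 0) (hΘ : DifferentiableAt ℝ Θ q) :
    fderiv ℝ (fun x => generatingFun N Q Θ (PhiWith N Q Θ q, x)) q = 0 := by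
  have h := (hΘ.hasFDerivAt.const_mul (kfun N Θ q)).sub
    (scaledCovector N Q (PhiWith N Q Θ q)).hasFDerivAt
  rw [kfun_smul_fderiv hμ, sub_self] at h
  exact h.fderiv

theorem fderiv_generatingFun_left {y : E N} (hQ : DifferentiableAt ℝ Q y.2.2) (x w : E N) :
    fderiv ℝ (fun z => generatingFun N Q Θ (z, x)) y w =
      w.1 * (Θ x - y.2.1 * x.2.1) - w.2.1 * (y.1 * x.2.1) -
        (x.2.1 * fderiv ℝ Q y.2.2 w.2.2 + x.2.2 ⬝ᵥ w.2.2) := by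
  have hk : HasFDerivAt (fun z : E N => z.1) (.fst ℝ _ _) y := hasFDerivAt_fst
  have hα : HasFDerivAt (fun z : E N => z.2.1) (.fst ℝ _ _ ∘L .snd ℝ _ _) y :=
    hasFDerivAt_snd.fst
  have hM : HasFDerivAt (fun z : E N => z.2.2) (.snd ℝ _ _ ∘L .snd ℝ _ _) y :=
    hasFDerivAt_snd.snd
  have hQM := HasFDerivAt.comp (f := fun z : E N => z.2.2) y hQ.hasFDerivAt hM
  have hMi (i : Fin N) := (hasFDerivAt_pi'.1 hM i).const_mul (x.2.2 i)
  have h := (hk.mul_const (Θ x)).sub (((hQM.add (hk.mul hα)).mul_const x.2.1).const_add x.1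
    |>.add (HasFDerivAt.fun_sum fun i (_ : i ∈ Finset.univ) => hMi i))
  have hgen : (fun z => generatingFun N Q Θ (z, x)) = fun z => z.1 * Θ x -
      (x.1 + (Q z.2.2 + z.1 * z.2.1) * x.2.1 + ∑ i, x.2.2 i * z.2.2 i) := by
    funext z
    simp only [generatingFun, scaledCovector_apply, dotProduct]
  rw [hgen]
  refine (DFunLike.congr_fun h.fderiv w).trans ?_
  simp only [smul_add, _root_.sub_apply, _root_.add_apply, _root_.smul_apply, _root_.sum_apply,
    ContinuousLinearMap.comp_apply, ContinuousLinearMap.coe_fst', ContinuousLinearMap.coe_snd',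
    ContinuousLinearMap.proj_apply, smul_eq_mul, dotProduct]
  ring

theorem differentiableAt_generatingFun {y x : E N} (hQ : DifferentiableAt ℝ Q y.2.2)
    (hΘ : DifferentiableAt ℝ Θ x) : DifferentiableAt ℝ (generatingFun N Q Θ) (y, x) := by
  have hcov : DifferentiableAt ℝ (fun z : E N × E N => scaledCovector N Q z.1) (y, x) :=
    DifferentiableAt.comp (f := Prod.fst) (y, x) (differentiableAt_scaledCovector hQ)
      differentiableAt_fst
  have hΘ' : DifferentiableAt ℝ (fun z : E N × E N => Θ z.2) (y, x) :=
    DifferentiableAt.comp (f := Prod.snd) (y, x) hΘ differentiableAt_snd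
  exact (DifferentiableAt.fst differentiableAt_fst |>.mul hΘ').sub
    (hcov.clm_apply differentiableAt_snd)

theorem fderiv_Hav_comp_leftInverse {Ψ : E N → E N} {s : Set (E N)} {p : E N} (hp : p ∈ s)
    (hs : IsOpen (PhiWith N Q Θ '' s)) (hΨ : ∀ x ∈ s, Ψ (PhiWith N Q Θ x) = x)
    (hμ : ∀ x ∈ s, dmu N Θ x ≠ 0) (hΘ : DifferentiableAt ℝ Θ p)
    (hΨd : DifferentiableAt ℝ Ψ (PhiWith N Q Θ p)) (hQ : DifferentiableAt ℝ Q (Mfun N Θ p)) :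
    fderiv ℝ (Hav N Θ ∘ Ψ) (PhiWith N Q Θ p) =
      fderiv ℝ (fun y => generatingFun N Q Θ (y, p)) (PhiWith N Q Θ p) := by
  have hΨp : Ψ (PhiWith N Q Θ p) = p := hΨ p hp
  have hlocal : Hav N Θ ∘ Ψ =ᶠ[𝓝 (PhiWith N Q Θ p)] fun y => generatingFun N Q Θ (y, Ψ y) := by
    filter_upwards [hs.mem_nhds (Set.mem_image_of_mem _ hp)]
    rintro _ ⟨x, hx, rfl⟩
    simp only [Function.comp_apply, hΨ x hx, Hav_eq_generatingFun (Q := Q) (hμ x hx)]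
  rw [hlocal.fderiv_eq, fderiv_envelope ?_ hΨd, hΨp]
  · rw [hΨp]
    exact fderiv_generatingFun_right (hμ p hp) hΘ
  · rw [hΨp]
    exact differentiableAt_generatingFun hQ hΘ

end LocalInverse

theorem stmt6_general (N : ℕ) (n : WithTop ℕ∞) (hn : n ≠ 0) (Q : (Fin N → ℝ) → ℝ)
    (Q' : (Fin N → ℝ) → Fin N → ℝ) (hQ : ContDiff ℝ n Q)
    (hQ' : ∀ M v, fderiv ℝ Q M v = v ⬝ᵥ Q' M)
    (Ω : Set (E N)) (hΩ : IsOpen Ω) (Θ : E N → ℝ) (hΘ : ContDiffOn ℝ (n + 1) Θ Ω)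
    (hμ : ∀ q ∈ Ω, dmu N Θ q ≠ 0)
    (p : E N) (hp : p ∈ Ω) (hhess : IsUnit (hessMat N Θ p).det) :
    ∃ s : Set (E N), IsOpen s ∧ p ∈ s ∧ s ⊆ Ω ∧
      ContDiffOn ℝ n (PhiWith N Q Θ) s ∧ Set.InjOn (PhiWith N Q Θ) s ∧
      IsOpen (PhiWith N Q Θ '' s) ∧
      ∃ Ψ : E N → E N, (∀ x ∈ s, Ψ (PhiWith N Q Θ x) = x) ∧
        ContDiffOn ℝ n Ψ (PhiWith N Q Θ '' s) ∧
        fderiv ℝ (Hav N Θ ∘ Ψ) (PhiWith N Q Θ p) (1, 0, 0)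
          = Θ p - (PhiWith N Q Θ p).2.1 * p.2.1 ∧
        fderiv ℝ (Hav N Θ ∘ Ψ) (PhiWith N Q Θ p) (0, 1, 0)
          = -(kfun N Θ p * p.2.1) ∧
        (fun i => fderiv ℝ (Hav N Θ ∘ Ψ) (PhiWith N Q Θ p) (0, 0, Pi.single i 1))
          = -p.2.1 • Q' (Mfun N Θ p) - p.2.2 := by
  have hΩp : Ω ∈ 𝓝 p := hΩ.mem_nhds hp
  have hQd : DifferentiableAt ℝ Q (Mfun N Θ p) := hQ.differentiable hn _
  have hΘp : ContDiffAt ℝ (n + 1) Θ p := hΘ.contDiffAt hΩp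
  have hΦ : ContDiffOn ℝ n (PhiWith N Q Θ) Ω := contDiffOn_PhiWith le_rfl hΩ hQ hΘ hμ
  have hinj : Function.Injective (fderiv ℝ (PhiWith N Q Θ) p) :=
    injective_fderiv_PhiWith hQd ((hΦ.contDiffAt hΩp).differentiableAt hn)
      ((hΘp.fderiv_right le_rfl).differentiableAt hn) (Filter.eventually_of_mem hΩp hμ) hhess
  obtain ⟨s, hs, hps, hsΩ, hsinj, himg, Ψ, hΨ, hΨs⟩ :=
    exists_contDiffOn_leftInverse hn hΩ hΦ hp (isInvertible_of_injective hinj)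
  have hΨd : DifferentiableAt ℝ Ψ (PhiWith N Q Θ p) :=
    (hΨs.contDiffAt (himg.mem_nhds (Set.mem_image_of_mem _ hps))).differentiableAt hn
  refine ⟨s, hs, hps, hsΩ, hΦ.mono hsΩ, hsinj, himg, Ψ, hΨ, hΨs, ?_⟩
  rw [fderiv_Hav_comp_leftInverse hps himg hΨ (fun x hx => hμ x (hsΩ hx))
    (hΘp.differentiableAt (by simp)) hΨd hQd]
  simp only [fderiv_generatingFun_left (y := PhiWith N Q Θ p) hQd]
  refine ⟨by simp, by simp [PhiWith], ?_⟩
  ext i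
  simp only [PhiWith, hQ', zero_mul, single_dotProduct, dotProduct_single, one_mul, mul_one,
    Pi.sub_apply, Pi.smul_apply, smul_eq_mul]
  ring

open Matrix in
/-- if `∇²Θ(p)` is invertible, then `Φ = (k,α,M)` is a diffeomorphism
onto its image on a neighborhood of `p`, and `h = H ∘ Φ⁻¹` satisfies, at `Φ(p)`:
`∂_k h = Θ(p) − α(p) c`, `∂_α h = −k(p) c`, `∇_M h = −c B⁻¹ M(p) − λ`. -/
theorem stmt6 (N : ℕ) (hN : 1 ≤ N) (B : Matrix (Fin N) (Fin N) ℝ)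
    (hBsymm : B.IsSymm) (hBinv : IsUnit B.det)
    (Ω : Set (E N)) (hΩ : IsOpen Ω)
    (Θ : E N → ℝ) (hΘ : ContDiffOn ℝ (⊤ : ℕ∞) Θ Ω)
    (hμpos : ∀ p ∈ Ω, 0 < dmu N Θ p)
    (p : E N) (hp : p ∈ Ω) (hhess : IsUnit (hessMat N Θ p).det) :
    ∃ s : Set (E N), IsOpen s ∧ p ∈ s ∧ s ⊆ Ω ∧
      ContDiffOn ℝ (⊤ : ℕ∞) (Phi N B Θ) s ∧ Set.InjOn (Phi N B Θ) s ∧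
      IsOpen (Phi N B Θ '' s) ∧
      ∃ Ψ : E N → E N, (∀ x ∈ s, Ψ (Phi N B Θ x) = x) ∧
        ContDiffOn ℝ (⊤ : ℕ∞) Ψ (Phi N B Θ '' s) ∧
        fderiv ℝ (Hav N Θ ∘ Ψ) (Phi N B Θ p) (1, 0, 0)
          = Θ p - afun N B Θ p * p.2.1 ∧
        fderiv ℝ (Hav N Θ ∘ Ψ) (Phi N B Θ p) (0, 1, 0)
          = -(kfun N Θ p * p.2.1) ∧
        (fun i => fderiv ℝ (Hav N Θ ∘ Ψ) (Phi N B Θ p) (0, 0, Pi.single i 1))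
          = -p.2.1 • B⁻¹.mulVec (Mfun N Θ p) - p.2.2 := by
  exact stmt6_general N (⊤ : ℕ∞) (by simp) (Qimp N B) _ contDiff_Qimp (fderiv_Qimp hBsymm)
    Ω hΩ Θ hΘ (fun q hq => (hμpos q hq).ne') p hp hhess
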